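/- For all x, x' ∈ ℝ³ with x₃ = x₃', the orthogonality relation φ₁(x)ψ₁(x') + φ₂(x)ψ₂(x') = 0 holds. -/

import Mathlib

noncomputable section

/-- `θⱼ(x) = κⱼx₁ + κⱼ²x₂ + κⱼ³x₃`. -/
def theta (κ : ℝ) (x : ℝ × ℝ × ℝ) : ℝ :=
  κ * x.1 + κ ^ 2 * x.2.1 + κ ^ 3 * x.2.2

/-- `τ(x) = e^{θ₁(x)} + a e^{θ₂(x)}`. -/
def tau (κ₁ κ₂ a : ℝ) (x : ℝ × ℝ × ℝ) : ℝ :=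
  Real.exp (theta κ₁ x) + a * Real.exp (theta κ₂ x)

/-- Value of the Sato eigenfunction at `κ₁`. -/
def phi1 (κ₁ κ₂ a : ℝ) (x : ℝ × ℝ × ℝ) : ℝ :=
  Real.exp (κ₁ * x.1 + κ₁ ^ 2 * x.2.1) * (1 - κ₂ / κ₁) * a * Real.exp (theta κ₂ x)
    / tau κ₁ κ₂ a x

/-- Value of the Sato eigenfunction at `κ₂`. -/
def phi2 (κ₁ κ₂ a : ℝ) (x : ℝ × ℝ × ℝ) : ℝ :=
  Real.exp (κ₂ * x.1 + κ₂ ^ 2 * x.2.1) * (1 - κ₁ / κ₂) * Real.exp (theta κ₁ x)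
    / tau κ₁ κ₂ a x

/-- Residue of the Sato adjoint eigenfunction at `κ₁`. -/
def psi1 (κ₁ κ₂ a : ℝ) (x : ℝ × ℝ × ℝ) : ℝ :=
  κ₁ * Real.exp (-(κ₁ * x.1 + κ₁ ^ 2 * x.2.1)) * Real.exp (theta κ₁ x)
    / tau κ₁ κ₂ a x

/-- Residue of the Sato adjoint eigenfunction at `κ₂`. -/
def psi2 (κ₁ κ₂ a : ℝ) (x : ℝ × ℝ × ℝ) : ℝ :=
  a * κ₂ * Real.exp (-(κ₂ * x.1 + κ₂ ^ 2 * x.2.1)) * Real.exp (theta κ₂ x)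
    / tau κ₁ κ₂ a x

/-! After clearing `τ`, the adjoint residue `ψⱼ` sees only `x₃`, while `κ₁φ₁` and `κ₂φ₂` share the
factor `e^{κ₁x₁+κ₁²x₂} e^{κ₂x₁+κ₂²x₂}` and have coefficients `κ₁ - κ₂` and `κ₂ - κ₁`. The sum is
therefore a multiple of `e^{κ₂³x₃+κ₁³x₃'} - e^{κ₁³x₃+κ₂³x₃'}`, which vanishes at equal third
coordinates. -/

/-- The part `e^{κx₁+κ²x₂}` of `e^{θ(x)}` that does not involve `x₃`; it is the exponential
prefactor of the Sato eigenfunction at `κ`. -/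
def planeWave (κ : ℝ) (x : ℝ × ℝ × ℝ) : ℝ :=
  Real.exp (κ * x.1 + κ ^ 2 * x.2.1)

theorem exp_theta (κ : ℝ) (x : ℝ × ℝ × ℝ) :
    Real.exp (theta κ x) = planeWave κ x * Real.exp (κ ^ 3 * x.2.2) :=
  Real.exp_add _ _

theorem exp_neg_mul_exp_theta (κ : ℝ) (x : ℝ × ℝ × ℝ) :
    Real.exp (-(κ * x.1 + κ ^ 2 * x.2.1)) * Real.exp (theta κ x) = Real.exp (κ ^ 3 * x.2.2) := by
  rw [← Real.exp_add, theta, neg_add_cancel_left]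

theorem tau_pos (κ₁ κ₂ : ℝ) {a : ℝ} (ha : 0 < a) (x : ℝ × ℝ × ℝ) : 0 < tau κ₁ κ₂ a x := by
  unfold tau
  positivity

section ClearedDenominators

variable {κ₁ κ₂ a : ℝ} {x : ℝ × ℝ × ℝ}

theorem tau_mul_psi1 (hτ : tau κ₁ κ₂ a x ≠ 0) :
    tau κ₁ κ₂ a x * psi1 κ₁ κ₂ a x = κ₁ * Real.exp (κ₁ ^ 3 * x.2.2) := by
  rw [psi1, mul_div_cancel₀ _ hτ, mul_assoc, exp_neg_mul_exp_theta]

theorem tau_mul_psi2 (hτ : tau κ₁ κ₂ a x ≠ 0) :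
    tau κ₁ κ₂ a x * psi2 κ₁ κ₂ a x = a * κ₂ * Real.exp (κ₂ ^ 3 * x.2.2) := by
  rw [psi2, mul_div_cancel₀ _ hτ, mul_assoc, exp_neg_mul_exp_theta]

theorem tau_mul_phi1_mul (hκ₁ : κ₁ ≠ 0) (hτ : tau κ₁ κ₂ a x ≠ 0) :
    tau κ₁ κ₂ a x * phi1 κ₁ κ₂ a x * κ₁ =
      (κ₁ - κ₂) * a * (planeWave κ₁ x * planeWave κ₂ x) * Real.exp (κ₂ ^ 3 * x.2.2) := by
  rw [phi1, mul_div_cancel₀ _ hτ, exp_theta, ← planeWave]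
  field_simp

theorem tau_mul_phi2_mul (hκ₂ : κ₂ ≠ 0) (hτ : tau κ₁ κ₂ a x ≠ 0) :
    tau κ₁ κ₂ a x * phi2 κ₁ κ₂ a x * κ₂ =
      (κ₂ - κ₁) * (planeWave κ₁ x * planeWave κ₂ x) * Real.exp (κ₁ ^ 3 * x.2.2) := by
  rw [phi2, mul_div_cancel₀ _ hτ, exp_theta, ← planeWave]
  field_simp

theorem tau_mul_tau_mul_phi_mul_psi_add {x' : ℝ × ℝ × ℝ} (hκ₁ : κ₁ ≠ 0) (hκ₂ : κ₂ ≠ 0)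
    (hτ : tau κ₁ κ₂ a x ≠ 0) (hτ' : tau κ₁ κ₂ a x' ≠ 0) :
    tau κ₁ κ₂ a x * tau κ₁ κ₂ a x' *
        (phi1 κ₁ κ₂ a x * psi1 κ₁ κ₂ a x' + phi2 κ₁ κ₂ a x * psi2 κ₁ κ₂ a x') =
      (κ₁ - κ₂) * a * (planeWave κ₁ x * planeWave κ₂ x) *
        (Real.exp (κ₂ ^ 3 * x.2.2) * Real.exp (κ₁ ^ 3 * x'.2.2) -
          Real.exp (κ₁ ^ 3 * x.2.2) * Real.exp (κ₂ ^ 3 * x'.2.2)) := by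
  calc
    _ = tau κ₁ κ₂ a x * phi1 κ₁ κ₂ a x * (tau κ₁ κ₂ a x' * psi1 κ₁ κ₂ a x') +
        tau κ₁ κ₂ a x * phi2 κ₁ κ₂ a x * (tau κ₁ κ₂ a x' * psi2 κ₁ κ₂ a x') := by ring
    _ = tau κ₁ κ₂ a x * phi1 κ₁ κ₂ a x * κ₁ * Real.exp (κ₁ ^ 3 * x'.2.2) +
        tau κ₁ κ₂ a x * phi2 κ₁ κ₂ a x * κ₂ * (a * Real.exp (κ₂ ^ 3 * x'.2.2)) := by
      rw [tau_mul_psi1 hτ', tau_mul_psi2 hτ']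
      ring
    _ = _ := by
      rw [tau_mul_phi1_mul hκ₁ hτ, tau_mul_phi2_mul hκ₂ hτ]
      ring

theorem sato_orthogonality_general {x' : ℝ × ℝ × ℝ} (hκ₁ : κ₁ ≠ 0) (hκ₂ : κ₂ ≠ 0)
    (hτ : tau κ₁ κ₂ a x ≠ 0) (hτ' : tau κ₁ κ₂ a x' ≠ 0) (hx : x.2.2 = x'.2.2) :
    phi1 κ₁ κ₂ a x * psi1 κ₁ κ₂ a x' + phi2 κ₁ κ₂ a x * psi2 κ₁ κ₂ a x' = 0 := by
  refine (mul_eq_zero_iff_left (mul_ne_zero hτ hτ')).mp ?_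
  rw [tau_mul_tau_mul_phi_mul_psi_add hκ₁ hκ₂ hτ hτ', hx]
  ring

end ClearedDenominators

/-- Orthogonality relation `φ₁(x)ψ₁(x') + φ₂(x)ψ₂(x') = 0` for `x₃ = x₃'`. -/
theorem sato_orthogonality (κ₁ κ₂ a : ℝ) (hκ : κ₁ < κ₂)
    (hκ₁ : κ₁ ≠ 0) (hκ₂ : κ₂ ≠ 0) (ha : 0 < a) :
    ∀ x x' : ℝ × ℝ × ℝ, x.2.2 = x'.2.2 →
      phi1 κ₁ κ₂ a x * psi1 κ₁ κ₂ a x' + phi2 κ₁ κ₂ a x * psi2 κ₁ κ₂ a x' = 0 := by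
  intro x x' hx
  exact sato_orthogonality_general hκ₁ hκ₂ (tau_pos κ₁ κ₂ ha x).ne' (tau_pos κ₁ κ₂ ha x').ne' hx
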